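/- Let H be a complex Hilbert space and let A, with domain D(A) ⊆ H, be the infinitesimal generator of a strongly continuous semigroup of contractions S(t) on H (‖S(t)‖ ≤ 1 for all t ≥ 0). Fix ε ∈ (0, 1/8), C₀ > 0 and β₀ ≥ 1, and suppose: (i) Re⟨Ax, x⟩ ≤ 0 for all x ∈ D(A); (ii) |Im⟨Ax, x⟩| ≤ C₀ · ‖Ax‖^(3/4 + 2ε) · ‖x‖^(1/4 − 2ε) · (−Re⟨Ax, x⟩)^(1/2) for all x ∈ D(A); and (iii) iβ lies in the resolvent set of A for every real β with |β| ≥ β₀. Then for every δ > 2/(1 − 8ε), the semigroup S(t) is of Gevrey class δ for t > 0. In particular, taking ε > 0 arbitrarily small, S(t) is of Gevrey class δ = 2 + ρ for every ρ > 0. -/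

import Mathlib

/-- A strongly continuous semigroup `S` (as an operator-valued function of time) is of
Gevrey class `δ` for `t > t₀`: `S` is infinitely differentiable in operator norm on
`(t₀, ∞)` and on every compact `K ⊆ (t₀, ∞)`, for every `θ > 0` there is `C > 0` with
`‖S⁽ⁿ⁾(t)‖ ≤ C θⁿ (n!)^δ` for all `t ∈ K` and all `n`. -/
def IsGevreyClass {X : Type*} [NormedAddCommGroup X] [NormedSpace ℂ X]
    (S : ℝ → X →L[ℂ] X) (δ : ℝ) (t₀ : ℝ) : Prop :=
  ContDiffOn ℝ (⊤ : ℕ∞) S (Set.Ioi t₀) ∧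
  ∀ K : Set ℝ, K ⊆ Set.Ioi t₀ → IsCompact K → ∀ θ : ℝ, 0 < θ →
    ∃ C > 0, ∀ t ∈ K, ∀ n : ℕ,
      ‖iteratedDerivWithin n S (Set.Ioi t₀) t‖ ≤ C * θ ^ n * (n.factorial : ℝ) ^ δ

/-!
With `z = (iβ - A) x`, the imaginary part of `⟨A x, x⟩` is `β ‖x‖²` up to `‖z‖ ‖x‖`, while its real
part is at most `‖z‖ ‖x‖`. A coupling estimate `|Im⟨A x, x⟩| ≤ C ‖A x‖^q ‖x‖^(1 - q) |Re⟨A x, x⟩|^½`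
therefore gives, by the inequality of arithmetic and geometric means, the resolvent bound
`‖x‖ ≲ |β|^(-α) ‖z‖` with `α = 2 (1 - q)`.

For a test function `φ` supported in `(0, ∞)`, the Fourier transform of the cut-off orbit
`t ↦ φ(t) S(t) x` lies in the domain of `A`, and `iξ - A` maps it to the Fourier transform of
`t ↦ φ'(t) S(t) x`. Each such integration by parts thus gains a factor `|ξ|^(-α)`, so that orbits
are smooth and `‖S⁽ᵏ⁾(t)‖ ≲ t^(-n)` for small `t`, where `n ≈ k / α`. The semigroup law splits
`S⁽ᴺ⁾(t)` into about `m = N / k` factors `S⁽ᵏ⁾(τ)` with `τ ≈ 1 / m`, whose product is of order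
`m^(n m) ≈ (N!)^(n / k)`, with `n / k` as close to `1 / α` as desired.
-/

open Filter MeasureTheory Set Topology
open scoped ContDiff FourierTransform

section GevreyBounds

open scoped Nat

theorem add_one_pow_le_exp_mul_factorial (m : ℕ) :
    ((m : ℝ) + 1) ^ m ≤ Real.exp 1 ^ (m + 1) * m ! := by
  have h := Real.pow_div_factorial_le_exp (m + 1 : ℝ) (by positivity) m
  rw [div_le_iff₀ (by positivity), ← Nat.cast_add_one, ← Real.exp_one_pow] at h
  exact_mod_cast h

theorem exists_pow_le_mul_factorial_rpow {Q η : ℝ} (hQ : 0 ≤ Q) (hη : 0 < η) :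
    ∃ C > 0, ∀ m : ℕ, Q ^ m ≤ C * (m ! : ℝ) ^ η := by
  refine ⟨Real.exp (Q ^ η⁻¹) ^ η, by positivity, fun m ↦ ?_⟩
  have h := Real.pow_div_factorial_le_exp (Q ^ η⁻¹) (by positivity) m
  rw [div_le_iff₀ (by positivity)] at h
  calc Q ^ m = ((Q ^ η⁻¹) ^ m) ^ η := by
        rw [← Real.rpow_pow_comm (by positivity), ← Real.rpow_mul (by positivity),
          inv_mul_cancel₀ hη.ne', Real.rpow_one]
    _ ≤ (Real.exp (Q ^ η⁻¹) * m !) ^ η := by gcongr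
    _ = Real.exp (Q ^ η⁻¹) ^ η * (m ! : ℝ) ^ η := Real.mul_rpow (by positivity) (by positivity)

theorem factorial_div_pow_le_factorial (N k : ℕ) : (N / k)! ^ k ≤ N ! := by
  have h := Nat.prod_factorial_dvd_factorial_sum (Finset.range k) fun _ ↦ N / k
  simp only [Finset.prod_const, Finset.sum_const, Finset.card_range, smul_eq_mul] at h
  exact (Nat.le_of_dvd (Nat.factorial_pos _) h).trans
    (Nat.factorial_le (Nat.mul_div_le N k))

theorem exists_pow_mul_add_one_pow_le {k n : ℕ} {c δ θ : ℝ} (hc : 0 ≤ c) (hn : n < k * δ)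
    (hθ : 0 < θ) :
    ∃ C > 0, ∀ N : ℕ, (c * ((N / k : ℕ) + 1) ^ n) ^ (N / k) ≤ C * θ ^ N * (N ! : ℝ) ^ δ := by
  have hkδ : 0 < k * δ := (Nat.cast_nonneg n).trans_lt hn
  have hk : k ≠ 0 := by rintro rfl; simp at hkδ
  have hδ : 0 < δ := pos_of_mul_pos_right hkδ (Nat.cast_nonneg k)
  set q : ℝ := min θ 1 ^ k with hq
  have hq₀ : 0 < q := by positivity
  obtain ⟨C, hC, hQ⟩ := exists_pow_le_mul_factorial_rpow
    (Q := c * Real.exp 1 ^ n / q) (by positivity) (sub_pos.2 hn)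
  refine ⟨C * Real.exp 1 ^ n / q, by positivity, fun N ↦ ?_⟩
  set m := N / k
  have hθN : q ^ m ≤ θ ^ N / q := by
    rw [le_div_iff₀ hq₀, ← pow_succ, hq, ← pow_mul]
    calc min θ 1 ^ (k * (m + 1)) ≤ min θ 1 ^ N :=
          pow_le_pow_of_le_one (by positivity) (min_le_right _ _)
            (Nat.lt_mul_div_succ N (Nat.pos_of_ne_zero hk)).le
      _ ≤ θ ^ N := by gcongr; exact min_le_left _ _
  have hfac : (m ! : ℝ) ^ (k * δ) ≤ (N ! : ℝ) ^ δ := by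
    rw [Real.rpow_mul (by positivity), Real.rpow_natCast]
    gcongr
    exact_mod_cast factorial_div_pow_le_factorial N k
  have hm_exp : (((m : ℝ) + 1) ^ n) ^ m ≤ (Real.exp 1 ^ (m + 1) * m !) ^ n := by
    rw [pow_right_comm]
    gcongr
    exact add_one_pow_le_exp_mul_factorial m
  calc (c * ((m : ℝ) + 1) ^ n) ^ m
      ≤ c ^ m * (Real.exp 1 ^ (m + 1) * m !) ^ n := by rw [mul_pow]; gcongr
    _ = (c * Real.exp 1 ^ n / q) ^ m * (q ^ m * Real.exp 1 ^ n * (m ! : ℝ) ^ n) := by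
      rw [div_pow, mul_pow, mul_pow]
      field_simp
      ring
    _ ≤ (C * (m ! : ℝ) ^ (k * δ - n)) * (θ ^ N / q * Real.exp 1 ^ n * (m ! : ℝ) ^ n) := by
      gcongr
      exact hQ m
    _ = C * Real.exp 1 ^ n / q * θ ^ N * (m ! : ℝ) ^ (k * δ) := by
      rw [Real.rpow_sub_natCast (by positivity)]
      field_simp
    _ ≤ C * Real.exp 1 ^ n / q * θ ^ N * (N ! : ℝ) ^ δ := by gcongr

theorem exists_nat_mul_lt_of_one_div_lt {α δ : ℝ} (hα : 0 < α) (hδ : 1 / α < δ) (c : ℝ) :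
    ∃ k n : ℕ, k + c ≤ α * n ∧ n < k * δ := by
  obtain ⟨k, hk⟩ := exists_nat_gt ((1 + |c| / α) / (δ - 1 / α))
  rw [div_lt_iff₀ (sub_pos.2 hδ)] at hk
  refine ⟨k, ⌈(k + |c|) / α⌉₊, ?_, ?_⟩
  · rw [← div_le_iff₀' hα]
    exact (by gcongr; exact le_abs_self c : (k + c) / α ≤ (k + |c|) / α).trans (Nat.le_ceil _)
  · have := Nat.ceil_lt_add_one (a := (k + |c|) / α) (by positivity)
    calc ((⌈(k + |c|) / α⌉₊ : ℕ) : ℝ) < (k + |c|) / α + 1 := this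
      _ = 1 + |c| / α + k * (1 / α) := by ring
      _ < k * δ := by linarith

theorem exists_subset_Icc_of_isCompact_of_pos {K : Set ℝ} (hK : IsCompact K) (hK₀ : K ⊆ Ioi 0) :
    ∃ a b : ℝ, 0 < a ∧ a ≤ 1 ∧ K ⊆ Icc a b := by
  obtain ⟨a, ⟨ha, hlb⟩⟩ := (hK.insert 1).exists_isLeast (insert_nonempty _ _)
  obtain ⟨b, hb⟩ := hK.bddAbove
  refine ⟨a, b, ?_, hlb (mem_insert _ _), fun t ht ↦ ⟨hlb (mem_insert_of_mem _ ht), hb ht⟩⟩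
  exact insert_subset (mem_Ioi.2 one_pos) hK₀ ha

variable {L : ℕ → ℝ → ℝ}

theorem le_pow_mul_of_submultiplicative (hL : ∀ j t, 0 ≤ L j t)
    (hmul : ∀ i j t s, 0 < t → 0 < s → L (i + j) (t + s) ≤ L i t * L j s)
    (k r : ℕ) {t s : ℝ} (ht : 0 < t) (hs : 0 < s) (m : ℕ) :
    L (m * k + r) (m * t + s) ≤ L k t ^ m * L r s := by
  induction m with
  | zero => simp
  | succ m ih =>
    calc L ((m + 1) * k + r) ((m + 1 : ℕ) * t + s)
        = L (k + (m * k + r)) (t + (m * t + s)) := by congr 1 <;> push_cast <;> ring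
      _ ≤ L k t * L (m * k + r) (m * t + s) := hmul _ _ _ _ ht (by positivity)
      _ ≤ L k t * (L k t ^ m * L r s) := mul_le_mul_of_nonneg_left ih (hL _ _)
      _ = L k t ^ (m + 1) * L r s := by ring

-- `t` is split into `m = N / k` steps of length `τ ≈ 1 / m` carrying `k` derivatives each, and a
-- remaining step bounded away from `0` which carries the other `N % k`.
theorem exists_gevrey_bound_of_submultiplicative (hL : ∀ j t, 0 ≤ L j t)
    (hmul : ∀ i j t s, 0 < t → 0 < s → L (i + j) (t + s) ≤ L i t * L j s)
    {k n : ℕ} {δ D : ℝ} (hn : n < k * δ) (hD : ∀ t ∈ Ioc 0 1, L k t ≤ D * t⁻¹ ^ n)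
    {a b B : ℝ} (ha : 0 < a) (ha1 : a ≤ 1)
    (hB : ∀ r < k, ∀ s ∈ Icc (a / 2) b, L r s ≤ B) {θ : ℝ} (hθ : 0 < θ) :
    ∃ C > 0, ∀ N : ℕ, ∀ t ∈ Icc a b, L N t ≤ C * θ ^ N * (N ! : ℝ) ^ δ := by
  have hk : 0 < k := Nat.pos_of_ne_zero fun hk ↦ by
    subst hk; simpa using (Nat.cast_nonneg n).trans_lt hn
  have hD₀ : 0 ≤ D := by simpa using (hL k 1).trans (hD 1 (by simp))
  obtain ⟨C, hC, hCN⟩ := exists_pow_mul_add_one_pow_le (c := D * (2 / a) ^ n) (by positivity) hn hθ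
  refine ⟨C * max B 1, by positivity, fun N t ht ↦ ?_⟩
  set m := N / k with hm
  set τ : ℝ := a / (2 * (m + 1)) with hτ
  have hτ₀ : 0 < τ := by positivity
  have hτ₁ : τ ≤ 1 := by
    rw [hτ, div_le_one (by positivity)]
    linarith [(Nat.cast_nonneg m : (0 : ℝ) ≤ m)]
  have hmτ : m * τ + τ = a / 2 := by rw [hτ]; field_simp
  have hs : t - m * τ ∈ Icc (a / 2) b :=
    ⟨by linarith [ht.1], by linarith [ht.2, mul_nonneg (Nat.cast_nonneg m) hτ₀.le]⟩
  calc L N t = L (m * k + N % k) (m * τ + (t - m * τ)) := by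
        rw [hm, Nat.div_add_mod', add_sub_cancel]
    _ ≤ L k τ ^ m * L (N % k) (t - m * τ) :=
      le_pow_mul_of_submultiplicative hL hmul _ _ hτ₀ ((half_pos ha).trans_le hs.1) m
    _ ≤ (D * τ⁻¹ ^ n) ^ m * max B 1 := by
      gcongr
      · exact hL _ _
      · exact hL _ _
      · exact hD τ ⟨hτ₀, hτ₁⟩
      · exact (hB _ (Nat.mod_lt _ hk) _ hs).trans (le_max_left _ _)
    _ = (D * (2 / a) ^ n * (m + 1) ^ n) ^ m * max B 1 := by
      rw [mul_assoc, ← mul_pow, hτ]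
      congr 4
      field_simp
    _ ≤ C * θ ^ N * (N ! : ℝ) ^ δ * max B 1 := by gcongr; exact hCN N
    _ = C * max B 1 * θ ^ N * (N ! : ℝ) ^ δ := by ring

end GevreyBounds

section StrongToNorm

variable {𝕜 E G : Type*} [NontriviallyNormedField 𝕜] [NormedAddCommGroup E] [NormedSpace 𝕜 E]
  [NormedAddCommGroup G] [NormedSpace 𝕜 G]

theorem exists_norm_le_of_continuousOn_apply [CompleteSpace E] {X : Type*} [TopologicalSpace X]
    {F : X → E →L[𝕜] G} {K : Set X} (hK : IsCompact K)
    (hF : ∀ x, ContinuousOn (fun t ↦ F t x) K) :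
    ∃ C ≥ 0, ∀ t ∈ K, ‖F t‖ ≤ C := by
  obtain ⟨C, hC⟩ := banach_steinhaus (g := fun t : K ↦ F t) fun x ↦
    (hK.exists_bound_of_continuousOn (hF x)).imp fun C hC t ↦ hC t t.2
  exact ⟨max C 0, le_max_right C 0, fun t ht ↦ (hC ⟨t, ht⟩).trans (le_max_left C 0)⟩

variable [NormedSpace ℝ G] {F F' : ℝ → E →L[𝕜] G} {s : Set ℝ}

theorem norm_sub_le_of_hasDerivAt_apply {C : ℝ} (hs : Convex ℝ s)
    (hF : ∀ x, ∀ t ∈ s, HasDerivAt (fun t ↦ F t x) (F' t x) t) (hC : ∀ t ∈ s, ‖F' t‖ ≤ C)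
    {a b : ℝ} (ha : a ∈ s) (hb : b ∈ s) : ‖F b - F a‖ ≤ C * ‖b - a‖ := by
  have hC₀ : 0 ≤ C := (norm_nonneg _).trans (hC a ha)
  refine ContinuousLinearMap.opNorm_le_bound _ (by positivity) fun x ↦ ?_
  calc ‖F b x - F a x‖ ≤ C * ‖x‖ * ‖b - a‖ :=
        hs.norm_image_sub_le_of_norm_hasDerivWithin_le
          (fun t ht ↦ (hF x t ht).hasDerivWithinAt)
          (fun t ht ↦ (F' t).le_of_opNorm_le (hC t ht) x) ha hb
    _ = C * ‖b - a‖ * ‖x‖ := by ring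

theorem continuousOn_of_hasDerivAt_apply [CompleteSpace E] (hs : IsOpen s)
    (hF : ∀ x, ∀ t ∈ s, HasDerivAt (fun t ↦ F t x) (F' t x) t)
    (hF' : ∀ x, ContinuousOn (fun t ↦ F' t x) s) : ContinuousOn F s := by
  intro t₀ ht₀
  obtain ⟨r, hr, hball⟩ := Metric.nhds_basis_closedBall.mem_iff.1 (hs.mem_nhds ht₀)
  obtain ⟨C, -, hC⟩ := exists_norm_le_of_continuousOn_apply (isCompact_closedBall t₀ r)
    fun x ↦ (hF' x).mono hball
  have hlip : LipschitzOnWith C.toNNReal F (Metric.closedBall t₀ r) :=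
    LipschitzOnWith.of_dist_le_mul fun a ha b hb ↦ by
      rw [dist_eq_norm, dist_eq_norm]
      exact norm_sub_le_of_hasDerivAt_apply (convex_closedBall t₀ r)
        (fun x t ht ↦ hF x t (hball ht))
        (fun t ht ↦ (hC t ht).trans (Real.le_coe_toNNReal C)) hb ha
  exact (hlip.continuousOn.continuousAt (Metric.closedBall_mem_nhds t₀ hr)).continuousWithinAt

variable [SMulCommClass 𝕜 ℝ G]

theorem hasDerivAt_of_hasDerivAt_apply {t₀ : ℝ} (hs : s ∈ 𝓝 t₀)
    (hF : ∀ x, ∀ t ∈ s, HasDerivAt (fun t ↦ F t x) (F' t x) t) (hF' : ContinuousAt F' t₀) :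
    HasDerivAt F (F' t₀) t₀ := by
  rw [hasDerivAt_iff_isLittleO, Asymptotics.isLittleO_iff]
  intro c hc
  obtain ⟨r, hr, hball⟩ := Metric.mem_nhds_iff.1
    (inter_mem hs (hF' (Metric.closedBall_mem_nhds _ hc)))
  have hderiv : ∀ x, ∀ t ∈ Metric.ball t₀ r,
      HasDerivAt (fun t ↦ (F t - t • F' t₀) x) ((F' t - F' t₀) x) t := fun x t ht ↦ by
    simpa using (hF x t (hball ht).1).fun_sub ((hasDerivAt_id t).smul_const (F' t₀ x))
  filter_upwards [Metric.ball_mem_nhds t₀ hr] with t ht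
  have := norm_sub_le_of_hasDerivAt_apply (convex_ball t₀ r) hderiv
    (fun u hu ↦ mem_closedBall_iff_norm.1 (hball hu).2) (Metric.mem_ball_self hr) ht
  rwa [sub_sub_sub_comm, ← sub_smul] at this

variable [CompleteSpace E]

theorem exists_hasDerivAt_apply (hF : ∀ x, ∀ t ∈ s, DifferentiableAt ℝ (fun t ↦ F t x) t) :
    ∃ F' : ℝ → E →L[𝕜] G, ∀ x, ∀ t ∈ s, HasDerivAt (fun t ↦ F t x) (F' t x) t := by
  have hlim : ∀ t, ∃ T : E →L[𝕜] G, t ∈ s → ∀ x, HasDerivAt (fun t ↦ F t x) (T x) t := by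
    intro t
    by_cases ht : t ∈ s
    · have hslope : Tendsto (fun h x ↦ (h⁻¹ • (F (t + h) - F t)) x) (𝓝[≠] 0)
          (𝓝 fun x ↦ deriv (fun t ↦ F t x) t) :=
        tendsto_pi_nhds.2 fun x ↦ (hF x t ht).hasDerivAt.tendsto_slope_zero
      exact ⟨continuousLinearMapOfTendsto _ hslope, fun _ x ↦ (hF x t ht).hasDerivAt⟩
    · exact ⟨0, fun h ↦ absurd h ht⟩
  choose F' hF' using hlim
  exact ⟨F', fun x t ht ↦ hF' t ht x⟩

-- By the uniform boundedness principle, one strong derivative gives norm continuity; hence every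
-- norm derivative costs one additional strong derivative.
theorem contDiffOn_of_contDiffOn_apply (hs : IsOpen s)
    (hF : ∀ x, ContDiffOn ℝ ∞ (fun t ↦ F t x) s) : ContDiffOn ℝ ∞ F s := by
  have exists_deriv : ∀ F : ℝ → E →L[𝕜] G, (∀ x, ContDiffOn ℝ ∞ (fun t ↦ F t x) s) →
      ∃ F' : ℝ → E →L[𝕜] G, (∀ x, ∀ t ∈ s, HasDerivAt (fun t ↦ F t x) (F' t x) t) ∧
        ∀ x, ContDiffOn ℝ ∞ (fun t ↦ F' t x) s := by
    intro F hF
    obtain ⟨F', hF'⟩ := exists_hasDerivAt_apply fun x t ht ↦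
      ((hF x).differentiableOn (by simp)).differentiableAt (hs.mem_nhds ht)
    exact ⟨F', hF', fun x ↦ ((contDiffOn_infty_iff_deriv_of_isOpen hs).1 (hF x)).2.congr
      fun t ht ↦ (hF' x t ht).deriv.symm⟩
  refine contDiffOn_infty.2 fun n ↦ ?_
  induction n generalizing F with
  | zero =>
    obtain ⟨F', hF', hF'_smooth⟩ := exists_deriv F hF
    exact contDiffOn_zero.2
      (continuousOn_of_hasDerivAt_apply hs hF' fun x ↦ (hF'_smooth x).continuousOn)
  | succ n ih =>
    obtain ⟨F', hF', hF'_smooth⟩ := exists_deriv F hF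
    obtain ⟨F'', hF'', hF''_smooth⟩ := exists_deriv F' hF'_smooth
    have hF'_cont : ContinuousOn F' s :=
      continuousOn_of_hasDerivAt_apply hs hF'' fun x ↦ (hF''_smooth x).continuousOn
    have hderiv : ∀ t ∈ s, HasDerivAt F (F' t) t := fun t ht ↦
      hasDerivAt_of_hasDerivAt_apply (hs.mem_nhds ht) hF' (hF'_cont.continuousAt (hs.mem_nhds ht))
    rw [Nat.cast_succ, contDiffOn_succ_iff_deriv_of_isOpen hs]
    exact ⟨fun t ht ↦ (hderiv t ht).differentiableAt.differentiableWithinAt, by simp,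
      (ih hF'_smooth).congr fun t ht ↦ (hderiv t ht).deriv⟩

end StrongToNorm

section IteratedDeriv

variable {𝕜 F G : Type*} [NontriviallyNormedField 𝕜] [NormedAddCommGroup F] [NormedSpace 𝕜 F]
  [NormedAddCommGroup G] [NormedSpace 𝕜 G]

theorem iteratedDeriv_clm_comp (L : F →L[𝕜] G) {f : 𝕜 → F} {n : ℕ} {t : 𝕜}
    (hf : ContDiffAt 𝕜 n f t) :
    iteratedDeriv n (fun s ↦ L (f s)) t = L (iteratedDeriv n f t) :=
  DFunLike.congr_fun (L.iteratedFDeriv_comp_left hf le_rfl) fun _ ↦ 1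

theorem exists_norm_iteratedDeriv_le_of_contDiffOn {f : 𝕜 → F} {U K : Set 𝕜} (hU : IsOpen U)
    (hf : ContDiffOn 𝕜 ∞ f U) (hK : IsCompact K) (hKU : K ⊆ U) (k : ℕ) :
    ∃ B, ∀ r < k, ∀ s ∈ K, ‖iteratedDeriv r f s‖ ≤ B := by
  have hcont : ∀ r : ℕ, ContinuousOn (iteratedDeriv r f) K := fun r ↦
    ((hf.continuousOn_iteratedDerivWithin (mod_cast le_top) hU.uniqueDiffOn).congr
      fun s hs ↦ (iteratedDerivWithin_of_isOpen hU hs).symm).mono hKU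
  choose B hB using fun r ↦ hK.exists_bound_of_continuousOn (hcont r)
  obtain ⟨C, hC⟩ := Finset.exists_le ((Finset.range k).image B)
  exact ⟨C, fun r hr s hs ↦
    (hB r s hs).trans (hC _ (Finset.mem_image_of_mem B (Finset.mem_range.2 hr)))⟩

end IteratedDeriv

section FourierRegularity

theorem integrable_inv_one_add_abs_sq : Integrable fun ξ : ℝ ↦ ((1 + |ξ|) ^ 2)⁻¹ := by
  refine (integrable_one_add_norm (E := ℝ) (μ := volume) (r := 2) (by simp)).congr
    (.of_forall fun ξ ↦ ?_)
  simp [Real.rpow_neg (by positivity : 0 ≤ 1 + |ξ|)]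

theorem abs_pow_mul_le_of_le_inv_one_add_pow {k : ℕ} {ξ y D : ℝ} (hy : 0 ≤ y)
    (h : y ≤ D * ((1 + |ξ|) ^ (k + 2))⁻¹) : |ξ| ^ k * y ≤ D * ((1 + |ξ|) ^ 2)⁻¹ := by
  calc |ξ| ^ k * y ≤ (1 + |ξ|) ^ k * (D * ((1 + |ξ|) ^ (k + 2))⁻¹) := by
        gcongr
        linarith
    _ = D * ((1 + |ξ|) ^ 2)⁻¹ := by rw [pow_add]; field_simp

theorem le_inv_one_add_pow {m : ℕ} {s ξ y a : ℝ} (hms : m ≤ s) (ha : 0 ≤ a) (h₀ : y ≤ a)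
    (h₁ : 1 ≤ |ξ| → y ≤ a * |ξ| ^ (-s)) : y ≤ 2 ^ m * a * ((1 + |ξ|) ^ m)⁻¹ := by
  rw [← div_eq_mul_inv, le_div_iff₀ (by positivity)]
  rcases le_total |ξ| 1 with hξ | hξ
  · calc y * (1 + |ξ|) ^ m ≤ a * 2 ^ m := by gcongr; linarith
      _ = 2 ^ m * a := mul_comm _ _
  · have : 0 < |ξ| := one_pos.trans_le hξ
    calc y * (1 + |ξ|) ^ m ≤ a * |ξ| ^ (-m : ℝ) * (2 * |ξ|) ^ m := by
          gcongr
          · exact (h₁ hξ).trans (by gcongr)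
          · linarith
      _ = 2 ^ m * a := by
        rw [Real.rpow_neg_natCast, zpow_neg, zpow_natCast, mul_pow]
        field_simp

variable {E : Type*} [NormedAddCommGroup E]

theorem integrable_abs_pow_mul_norm_of_decay {g : ℝ → E} (hg : Continuous g)
    (hdecay : ∀ k : ℕ, ∃ D, ∀ ξ, ‖g ξ‖ ≤ D * ((1 + |ξ|) ^ k)⁻¹) (k : ℕ) :
    Integrable fun ξ ↦ |ξ| ^ k * ‖g ξ‖ := by
  obtain ⟨D, hD⟩ := hdecay (k + 2)
  refine (integrable_inv_one_add_abs_sq.const_mul D).mono' (by fun_prop) (.of_forall fun ξ ↦ ?_)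
  simpa using abs_pow_mul_le_of_le_inv_one_add_pow (norm_nonneg _) (hD ξ)

theorem integrable_of_decay {g : ℝ → E} (hg : Continuous g)
    (hdecay : ∀ k : ℕ, ∃ D, ∀ ξ, ‖g ξ‖ ≤ D * ((1 + |ξ|) ^ k)⁻¹) : Integrable g :=
  (integrable_norm_iff hg.aestronglyMeasurable).1 <| by
    simpa using integrable_abs_pow_mul_norm_of_decay hg hdecay 0

variable [NormedSpace ℂ E]

theorem norm_iteratedDeriv_fourier_le {g : ℝ → E} (hg : Continuous g)
    (hgi : ∀ k : ℕ, Integrable fun ξ ↦ |ξ| ^ k * ‖g ξ‖) (k : ℕ) (t : ℝ) :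
    ‖iteratedDeriv k (𝓕 g) t‖ ≤ (2 * Real.pi) ^ k * ∫ ξ, |ξ| ^ k * ‖g ξ‖ := by
  have hsmul : ∀ n : ℕ, Integrable fun ξ : ℝ ↦ ξ ^ n • g ξ := fun n ↦
    (integrable_norm_iff (by fun_prop)).1 <| by simpa [norm_smul] using hgi n
  rw [Real.iteratedDeriv_fourier (N := ⊤) (fun n _ ↦ hsmul n) le_top, ← integral_const_mul]
  refine (VectorFourier.norm_fourierIntegral_le_integral_norm _ _ _ _ _).trans_eq ?_
  congr with ξ
  simp [norm_smul, mul_pow, abs_of_pos Real.pi_pos, mul_assoc]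

theorem continuous_fourier {f : ℝ → E} (hf : Integrable f) : Continuous (𝓕 f) :=
  VectorFourier.fourierIntegral_continuous Real.continuous_fourierChar
    (by fun_prop) hf

variable [CompleteSpace E] {f : ℝ → E}

theorem fourier_fourier_neg_eq (hf : Continuous f) (hfi : Integrable f) (hFi : Integrable (𝓕 f)) :
    𝓕 (fun ξ ↦ 𝓕 f (-ξ)) = f := by
  simpa only [← Real.fourierInv_eq_fourier_neg] using hf.fourier_fourierInv_eq hfi hFi

theorem contDiff_of_fourier_decay (hf : Continuous f) (hfi : Integrable f)
    (hdecay : ∀ k : ℕ, ∃ D, ∀ ξ, ‖𝓕 f ξ‖ ≤ D * ((1 + |ξ|) ^ k)⁻¹) : ContDiff ℝ ∞ f := by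
  have hF := integrable_abs_pow_mul_norm_of_decay (continuous_fourier hfi) hdecay
  rw [← fourier_fourier_neg_eq hf hfi (integrable_of_decay (continuous_fourier hfi) hdecay)]
  exact Real.contDiff_fourier fun n _ ↦ by simpa using (hF n).comp_neg

theorem norm_iteratedDeriv_le_of_fourier_decay (hf : Continuous f) (hfi : Integrable f)
    (hdecay : ∀ k : ℕ, ∃ D, ∀ ξ, ‖𝓕 f ξ‖ ≤ D * ((1 + |ξ|) ^ k)⁻¹) {k : ℕ} {D : ℝ}
    (hD : ∀ ξ, ‖𝓕 f ξ‖ ≤ D * ((1 + |ξ|) ^ (k + 2))⁻¹) (t : ℝ) :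
    ‖iteratedDeriv k f t‖ ≤ D * ((2 * Real.pi) ^ k * ∫ ξ : ℝ, ((1 + |ξ|) ^ 2)⁻¹) := by
  have hFc := continuous_fourier hfi
  have hF := integrable_abs_pow_mul_norm_of_decay hFc hdecay
  calc ‖iteratedDeriv k f t‖ = ‖iteratedDeriv k (𝓕 fun ξ ↦ 𝓕 f (-ξ)) t‖ := by
        rw [fourier_fourier_neg_eq hf hfi (integrable_of_decay hFc hdecay)]
    _ ≤ (2 * Real.pi) ^ k * ∫ ξ, |ξ| ^ k * ‖𝓕 f (-ξ)‖ :=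
      norm_iteratedDeriv_fourier_le (by fun_prop) (fun n ↦ by simpa using (hF n).comp_neg) k t
    _ ≤ (2 * Real.pi) ^ k * ∫ ξ : ℝ, D * ((1 + |ξ|) ^ 2)⁻¹ := by
      gcongr
      · simpa using (hF k).comp_neg
      · exact integrable_inv_one_add_abs_sq.const_mul D
      · intro ξ
        simpa using abs_pow_mul_le_of_le_inv_one_add_pow (ξ := -ξ) (norm_nonneg _) (hD (-ξ))
    _ = D * ((2 * Real.pi) ^ k * ∫ ξ : ℝ, ((1 + |ξ|) ^ 2)⁻¹) := by
      rw [integral_const_mul]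
      ring

end FourierRegularity

section Cutoffs

theorem tsupport_iteratedDeriv_subset {𝕜 F : Type*} [NontriviallyNormedField 𝕜]
    [NormedAddCommGroup F] [NormedSpace 𝕜 F] {f : 𝕜 → F} (n : ℕ) :
    tsupport (iteratedDeriv n f) ⊆ tsupport f := by
  induction n with
  | zero => simp
  | succ n ih => simpa [iteratedDeriv_succ] using tsupport_deriv_subset.trans ih

/-- Smooth functions with compact support in the open half-line `(0, ∞)`. -/
structure IsTestFunction (φ : ℝ → ℂ) : Prop where
  contDiff : ContDiff ℝ ∞ φ
  hasCompactSupport : HasCompactSupport φ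
  tsupport_subset : tsupport φ ⊆ Ioi 0

namespace IsTestFunction

variable {φ : ℝ → ℂ}

protected theorem deriv (hφ : IsTestFunction φ) : IsTestFunction (deriv φ) where
  contDiff := (contDiff_infty_iff_deriv.1 hφ.contDiff).2
  hasCompactSupport := hφ.hasCompactSupport.deriv
  tsupport_subset := tsupport_deriv_subset.trans hφ.tsupport_subset

protected theorem iteratedDeriv (hφ : IsTestFunction φ) (n : ℕ) :
    IsTestFunction (iteratedDeriv n φ) := by
  induction n with
  | zero => simpa
  | succ n ih => simpa [iteratedDeriv_succ] using ih.deriv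

theorem mul_left (hφ : IsTestFunction φ) {e : ℝ → ℂ} (he : ContDiff ℝ ∞ e) :
    IsTestFunction fun t ↦ e t * φ t where
  contDiff := he.mul hφ.contDiff
  hasCompactSupport := hφ.hasCompactSupport.mul_left
  tsupport_subset := (tsupport_mul_subset_right (f := e)).trans hφ.tsupport_subset

theorem integrable (hφ : IsTestFunction φ) : Integrable φ :=
  hφ.contDiff.continuous.integrable_of_hasCompactSupport hφ.hasCompactSupport

end IsTestFunction

theorem integral_norm_iteratedDeriv_comp_mul {φ : ℝ → ℂ} (hφ : ContDiff ℝ ∞ φ) (n : ℕ) {c : ℝ}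
    (hc : 0 < c) :
    ∫ t, ‖iteratedDeriv n (fun t ↦ φ (c * t)) t‖ =
      c⁻¹ * c ^ n * ∫ t, ‖iteratedDeriv n φ t‖ := by
  have hscale : iteratedDeriv n (fun t ↦ φ (c * t)) = fun t ↦ c ^ n • iteratedDeriv n φ (c * t) :=
    iteratedDeriv_comp_const_smul (hφ.of_le (mod_cast le_top)) c
  simp only [hscale, norm_smul, norm_pow, Real.norm_of_nonneg hc.le]
  rw [integral_const_mul, Measure.integral_comp_mul_left (fun t ↦ ‖iteratedDeriv n φ t‖),
    abs_of_pos (inv_pos.2 hc), smul_eq_mul]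
  ring

theorem exists_contDiff_cutoff_one : ∃ φ : ℝ → ℂ, ContDiff ℝ ∞ φ ∧
    tsupport φ ⊆ Icc (1 / 2) (3 / 2) ∧ φ =ᶠ[𝓝 1] 1 := by
  let b : ContDiffBump (1 : ℝ) := ⟨1 / 4, 1 / 2, by norm_num, by norm_num⟩
  refine ⟨fun t ↦ (b t : ℂ), Complex.ofRealCLM.contDiff.comp b.contDiff, ?_, ?_⟩
  · have hsupp : tsupport (fun t ↦ (b t : ℂ)) ⊆ tsupport b := closure_mono fun t ht ↦ by
      simpa using ht
    refine hsupp.trans ?_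
    rw [b.tsupport_eq, Real.closedBall_eq_Icc]
    norm_num [b]
  · filter_upwards [b.eventuallyEq_one] with t ht
    simp [ht]

theorem eventuallyEq_smul {E : Type*} [AddCommGroup E] [Module ℂ E] {φ : ℝ → ℂ} {τ : ℝ}
    (hφ : φ =ᶠ[𝓝 τ] 1) (u : ℝ → E) : (fun t ↦ φ t • u t) =ᶠ[𝓝 τ] u := by
  filter_upwards [hφ] with t ht
  simp [ht]

theorem exists_isTestFunction_eventuallyEq_one :
    ∃ G : ℕ → ℝ, (∀ n, 0 ≤ G n) ∧ ∀ τ > 0, ∃ φ : ℝ → ℂ,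
      IsTestFunction φ ∧ tsupport φ ⊆ Icc (τ / 2) (3 * τ / 2) ∧ φ =ᶠ[𝓝 τ] 1 ∧
        ∀ n, ∫ t, ‖iteratedDeriv n φ t‖ = τ * τ⁻¹ ^ n * G n := by
  obtain ⟨φ, hφ, hsupp, hone⟩ := exists_contDiff_cutoff_one
  refine ⟨fun n ↦ ∫ t, ‖iteratedDeriv n φ t‖, fun n ↦ by positivity, fun τ hτ ↦ ?_⟩
  have hsupp_τ : tsupport (fun t ↦ φ (τ⁻¹ * t)) ⊆ Icc (τ / 2) (3 * τ / 2) := by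
    refine closure_minimal (fun t ht ↦ ?_) isClosed_Icc
    have hmem := hsupp (subset_tsupport φ ht)
    rw [inv_mul_eq_div, mem_Icc, le_div_iff₀ hτ, div_le_iff₀ hτ] at hmem
    constructor <;> linarith
  refine ⟨fun t ↦ φ (τ⁻¹ * t), ⟨hφ.comp (by fun_prop),
    isCompact_Icc.of_isClosed_subset (isClosed_tsupport _) hsupp_τ,
    fun t ht ↦ (half_pos hτ).trans_le (hsupp_τ ht).1⟩, hsupp_τ, ?_, fun n ↦ ?_⟩
  · have hscale : Tendsto (fun t ↦ τ⁻¹ * t) (𝓝 τ) (𝓝 1) := by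
      simpa [hτ.ne'] using tendsto_id.const_mul τ⁻¹ (x := 𝓝 τ)
    exact hscale.eventually hone
  · rw [integral_norm_iteratedDeriv_comp_mul hφ n (inv_pos.2 hτ), inv_inv]

end Cutoffs

section Semigroup

variable {E : Type*} [NormedAddCommGroup E] [NormedSpace ℂ E]

/-- Strongly continuous semigroups of bounded operators on `E`. They are functions on all of `ℝ`,
to allow two-sided derivatives; the values at negative times are irrelevant. -/
structure IsStronglyContinuousSemigroup (S : ℝ → E →L[ℂ] E) : Prop where
  map_zero : S 0 = ContinuousLinearMap.id ℂ E
  map_add : ∀ t s : ℝ, 0 ≤ t → 0 ≤ s → S (t + s) = (S t).comp (S s)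
  continuousOn_apply : ∀ x, ContinuousOn (fun t ↦ S t x) (Ici 0)

/-- The graph of the infinitesimal generator `A` of `S`: the pairs with `x ∈ D(A)` and
`y = A x`. -/
def InGeneratorGraph (S : ℝ → E →L[ℂ] E) (x y : E) : Prop :=
  HasDerivWithinAt (fun t ↦ S t x) y (Ici 0) 0

/-- The a priori form of the resolvent estimate `‖(iβ - A)⁻¹‖ ≤ M |β|⁻ᵅ` for the generator `A`
of `S`. It does not presuppose that `iβ` lies in the resolvent set. -/
def HasResolventDecay (S : ℝ → E →L[ℂ] E) (M α : ℝ) : Prop :=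
  ∀ x y, InGeneratorGraph S x y → ∀ β : ℝ, 1 ≤ |β| →
    ‖x‖ ≤ M * |β| ^ (-α) * ‖(Complex.I * β) • x - y‖

variable {S : ℝ → E →L[ℂ] E} {φ : ℝ → ℂ}

theorem IsTestFunction.continuous_smul (hφ : IsTestFunction φ)
    (hS : IsStronglyContinuousSemigroup S) (x : E) :
    Continuous fun t ↦ φ t • S t x := by
  refine continuous_of_tsupport fun t ht ↦ hφ.contDiff.continuous.continuousAt.smul
    ((hS.continuousOn_apply x).continuousAt (Ici_mem_nhds (hφ.tsupport_subset ?_)))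
  exact tsupport_smul_subset_left φ (fun t ↦ S t x) ht

theorem IsTestFunction.integrable_smul (hφ : IsTestFunction φ)
    (hS : IsStronglyContinuousSemigroup S) (x : E) :
    Integrable fun t ↦ φ t • S t x :=
  (hφ.continuous_smul hS x).integrable_of_hasCompactSupport hφ.hasCompactSupport.smul_right

theorem norm_fourier_smul_le_integral (hφ : Integrable φ) {K : ℝ}
    (hK : ∀ t ∈ Function.support φ, ‖S t‖ ≤ K) (x : E) (ξ : ℝ) :
    ‖𝓕 (fun t ↦ φ t • S t x) ξ‖ ≤ (∫ t, ‖φ t‖) * (K * ‖x‖) := by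
  rw [← integral_mul_const]
  refine (VectorFourier.norm_fourierIntegral_le_integral_norm _ _ _ _ _).trans
    (integral_mono_of_nonneg (.of_forall fun t ↦ norm_nonneg _) (hφ.norm.mul_const _)
      (.of_forall fun t ↦ ?_))
  by_cases ht : φ t = 0
  · simp [ht]
  · simp only [norm_smul]
    gcongr
    exact (S t).le_of_opNorm_le (hK t ht) x

theorem hasDerivAt_integral_smul_comp_add (hφ : ContDiff ℝ 1 φ)
    (hsupp : HasCompactSupport φ) {u : ℝ → E} (hu : LocallyIntegrable u) (h : ℝ) :
    HasDerivAt (fun h ↦ ∫ t, φ t • u (h + t)) (-∫ t, deriv φ t • u (h + t)) h := by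
  have convolution_eq : ∀ ψ : ℝ → ℂ, convolution (ψ ∘ Neg.neg) u (ContinuousLinearMap.lsmul ℝ ℂ) =
      fun h ↦ ∫ t, ψ t • u (h + t) := fun ψ ↦ funext fun h ↦ by
    rw [convolution_def, ← integral_neg_eq_self]
    simp
  have deriv_eq : deriv (φ ∘ Neg.neg) = (-deriv φ) ∘ Neg.neg := funext (deriv_comp_neg φ)
  have hconv := (hsupp.comp_homeomorph (Homeomorph.neg ℝ)).hasDerivAt_convolution_left
    (ContinuousLinearMap.lsmul ℝ ℂ) (μ := volume) (hφ.comp contDiff_neg) hu h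
  simpa [deriv_eq, convolution_eq, integral_neg] using hconv

namespace IsStronglyContinuousSemigroup

theorem iteratedDeriv_add_eq_comp (hS : IsStronglyContinuousSemigroup S)
    (hsmooth : ContDiffOn ℝ ∞ S (Ioi 0)) (j : ℕ) {t s : ℝ} (ht : 0 ≤ t) (hs : 0 < s) :
    iteratedDeriv j S (t + s) = (S t).comp (iteratedDeriv j S s) := by
  let L := (ContinuousLinearMap.compL ℂ E E E (S t)).restrictScalars ℝ
  have hshift : (fun s ↦ S (t + s)) =ᶠ[𝓝 s] fun s ↦ L (S s) := by
    filter_upwards [Ioi_mem_nhds hs] with r hr using hS.map_add t r ht hr.le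
  calc iteratedDeriv j S (t + s) = iteratedDeriv j (fun s ↦ S (t + s)) s := by
        rw [iteratedDeriv_comp_const_add]
    _ = iteratedDeriv j (fun s ↦ L (S s)) s := hshift.iteratedDeriv_eq j
    _ = L (iteratedDeriv j S s) := iteratedDeriv_clm_comp L
      ((hsmooth.contDiffAt (Ioi_mem_nhds hs)).of_le (mod_cast le_top))

theorem iteratedDeriv_add_eq_comp_iteratedDeriv (hS : IsStronglyContinuousSemigroup S)
    (hsmooth : ContDiffOn ℝ ∞ S (Ioi 0)) (i j : ℕ) {t s : ℝ} (ht : 0 < t) (hs : 0 < s) :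
    iteratedDeriv (i + j) S (t + s) = (iteratedDeriv i S t).comp (iteratedDeriv j S s) := by
  let R := ((ContinuousLinearMap.compL ℂ E E E).flip (iteratedDeriv j S s)).restrictScalars ℝ
  have hshift : (fun t ↦ iteratedDeriv j S (t + s)) =ᶠ[𝓝 t] fun t ↦ R (S t) := by
    filter_upwards [Ioi_mem_nhds ht] with r hr
      using hS.iteratedDeriv_add_eq_comp hsmooth j hr.le hs
  calc iteratedDeriv (i + j) S (t + s)
      = iteratedDeriv i (fun t ↦ iteratedDeriv j S (t + s)) t := by
        rw [iteratedDeriv_comp_add_const]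
        simp only [iteratedDeriv_eq_iterate, Function.iterate_add_apply]
    _ = iteratedDeriv i (fun t ↦ R (S t)) t := hshift.iteratedDeriv_eq i
    _ = R (iteratedDeriv i S t) := iteratedDeriv_clm_comp R
      ((hsmooth.contDiffAt (Ioi_mem_nhds ht)).of_le (mod_cast le_top))

theorem norm_iteratedDeriv_add_le (hS : IsStronglyContinuousSemigroup S)
    (hsmooth : ContDiffOn ℝ ∞ S (Ioi 0)) (i j : ℕ) (t s : ℝ) (ht : 0 < t) (hs : 0 < s) :
    ‖iteratedDeriv (i + j) S (t + s)‖ ≤ ‖iteratedDeriv i S t‖ * ‖iteratedDeriv j S s‖ := by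
  rw [hS.iteratedDeriv_add_eq_comp_iteratedDeriv hsmooth i j ht hs]
  exact ContinuousLinearMap.opNorm_comp_le _ _

end IsStronglyContinuousSemigroup

variable [CompleteSpace E]

theorem IsTestFunction.inGeneratorGraph (hφ : IsTestFunction φ)
    (hS : IsStronglyContinuousSemigroup S) (x : E) :
    InGeneratorGraph S (∫ t, φ t • S t x) (-∫ t, deriv φ t • S t x) := by
  have hu : Continuous fun t ↦ S (max t 0) x :=
    (hS.continuousOn_apply x).comp_continuous (by fun_prop) fun t ↦ le_max_right t 0
  have smul_eq : ∀ {ψ : ℝ → ℂ}, IsTestFunction ψ → ∀ h ≥ 0, ∀ t,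
      ψ t • S (max (h + t) 0) x = ψ t • S (h + t) x := by
    intro ψ hψ h hh t
    by_cases ht : t ∈ tsupport ψ
    · rw [max_eq_left (add_nonneg hh (hψ.tsupport_subset ht).le)]
    · simp [image_eq_zero_of_notMem_tsupport ht]
  have key := hasDerivAt_integral_smul_comp_add (hφ.contDiff.of_le (by simp))
    hφ.hasCompactSupport hu.locallyIntegrable 0
  simp_rw [smul_eq hφ.deriv 0 le_rfl, zero_add] at key
  refine key.hasDerivWithinAt.congr_of_mem (fun h hh ↦ ?_) self_mem_Ici
  simp only [smul_eq hφ h hh]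
  rw [← (S h).integral_comp_comm (hφ.integrable_smul hS x)]
  congr with t
  by_cases ht : t ∈ tsupport φ
  · simp [hS.map_add h t hh (hφ.tsupport_subset ht).le]
  · simp [image_eq_zero_of_notMem_tsupport ht]

theorem IsTestFunction.inGeneratorGraph_fourier (hφ : IsTestFunction φ)
    (hS : IsStronglyContinuousSemigroup S) (x : E) (ξ : ℝ) :
    InGeneratorGraph S (𝓕 (fun t ↦ φ t • S t x) ξ)
      ((Complex.I * (2 * Real.pi * ξ : ℝ)) • 𝓕 (fun t ↦ φ t • S t x) ξ -
        𝓕 (fun t ↦ deriv φ t • S t x) ξ) := by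
  set c : ℂ := Complex.I * (2 * Real.pi * ξ : ℝ) with hc
  set e : ℝ → ℂ := fun t ↦ Complex.exp (-c * t) with he_def
  have he : ContDiff ℝ ∞ e := (contDiff_const.mul Complex.ofRealCLM.contDiff).cexp
  have he_deriv : ∀ t, HasDerivAt e (-c * e t) t := fun t ↦ by
    simpa [e, mul_comm] using ((hasDerivAt_id (t : ℂ)).const_mul (-c)).cexp.comp_ofReal
  have fourier_eq : ∀ ψ : ℝ → ℂ, 𝓕 (fun t ↦ ψ t • S t x) ξ = ∫ t, (e t * ψ t) • S t x := by
    intro ψ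
    rw [Real.fourier_real_eq_integral_exp_smul]
    congr with t
    rw [he_def, hc, mul_smul]
    push_cast
    ring_nf
  have deriv_eq : (fun t ↦ deriv (fun t ↦ e t * φ t) t • S t x) = fun t ↦
      (e t * deriv φ t) • S t x - c • (e t * φ t) • S t x := by
    funext t
    rw [((he_deriv t).fun_mul (hφ.contDiff.differentiable (by simp) t).hasDerivAt).deriv,
      smul_smul, ← sub_smul]
    ring_nf
  have key := (hφ.mul_left he).inGeneratorGraph hS x
  rwa [deriv_eq, integral_sub ((hφ.deriv.mul_left he).integrable_smul hS x)
    (((hφ.mul_left he).integrable_smul hS x).fun_smul c), integral_smul, neg_sub,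
    ← fourier_eq, ← fourier_eq] at key

variable {M α : ℝ}

theorem IsTestFunction.norm_fourier_smul_le (hφ : IsTestFunction φ)
    (hS : IsStronglyContinuousSemigroup S) (hdecay : HasResolventDecay S M α) (hM : 0 ≤ M)
    (hα : 0 ≤ α) (x : E) {ξ : ℝ} (hξ : 1 ≤ |ξ|) (n : ℕ) :
    ‖𝓕 (fun t ↦ φ t • S t x) ξ‖ ≤
      (M * |ξ| ^ (-α)) ^ n * ‖𝓕 (fun t ↦ iteratedDeriv n φ t • S t x) ξ‖ := by
  induction n generalizing φ with
  | zero => simp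
  | succ n ih =>
    have hξβ : |ξ| ≤ |2 * Real.pi * ξ| := by
      rw [abs_mul, abs_of_pos Real.two_pi_pos]
      exact le_mul_of_one_le_left (abs_nonneg ξ) (by linarith [Real.pi_gt_three])
    have hstep := hdecay _ _ (hφ.inGeneratorGraph_fourier hS x ξ) _ (hξ.trans hξβ)
    rw [sub_sub_cancel] at hstep
    calc ‖𝓕 (fun t ↦ φ t • S t x) ξ‖
        ≤ M * |2 * Real.pi * ξ| ^ (-α) * ‖𝓕 (fun t ↦ deriv φ t • S t x) ξ‖ := hstep
      _ ≤ M * |ξ| ^ (-α) * ((M * |ξ| ^ (-α)) ^ n *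
            ‖𝓕 (fun t ↦ iteratedDeriv n (deriv φ) t • S t x) ξ‖) := by
        gcongr _ * ?_ * ?_
        · exact Real.rpow_le_rpow_of_nonpos (by positivity) hξβ (by simpa)
        · exact ih hφ.deriv
      _ = _ := by rw [← iteratedDeriv_succ', pow_succ']; ring

theorem IsTestFunction.norm_fourier_smul_le_inv_one_add_pow (hφ : IsTestFunction φ)
    (hS : IsStronglyContinuousSemigroup S) (hdecay : HasResolventDecay S M α) (hM : 0 ≤ M)
    (hα : 0 ≤ α) {K B : ℝ} (hK : ∀ t ∈ tsupport φ, ‖S t‖ ≤ K) (hK₀ : 0 ≤ K) {m n : ℕ}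
    (hmn : m ≤ α * n) (hB₀ : ∫ t, ‖φ t‖ ≤ B) (hBn : M ^ n * ∫ t, ‖iteratedDeriv n φ t‖ ≤ B)
    (x : E) (ξ : ℝ) :
    ‖𝓕 (fun t ↦ φ t • S t x) ξ‖ ≤ 2 ^ m * (B * (K * ‖x‖)) * ((1 + |ξ|) ^ m)⁻¹ := by
  have hbound : ∀ j, ‖𝓕 (fun t ↦ iteratedDeriv j φ t • S t x) ξ‖ ≤
      (∫ t, ‖iteratedDeriv j φ t‖) * (K * ‖x‖) := fun j ↦
    norm_fourier_smul_le_integral (hφ.iteratedDeriv j).integrable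
      (fun t ht ↦ hK t (tsupport_iteratedDeriv_subset j (subset_tsupport _ ht))) x ξ
  have hB : 0 ≤ B := (integral_nonneg fun t ↦ norm_nonneg _).trans hB₀
  refine le_inv_one_add_pow hmn (by positivity) ?_ fun hξ ↦ ?_
  · calc ‖𝓕 (fun t ↦ φ t • S t x) ξ‖ ≤ (∫ t, ‖φ t‖) * (K * ‖x‖) := by simpa using hbound 0
      _ ≤ B * (K * ‖x‖) := by gcongr
  · calc ‖𝓕 (fun t ↦ φ t • S t x) ξ‖
        ≤ (M * |ξ| ^ (-α)) ^ n * ((∫ t, ‖iteratedDeriv n φ t‖) * (K * ‖x‖)) :=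
          (hφ.norm_fourier_smul_le hS hdecay hM hα x hξ n).trans (by gcongr; exact hbound n)
      _ = (M ^ n * ∫ t, ‖iteratedDeriv n φ t‖) * (K * ‖x‖) * |ξ| ^ (-(α * n)) := by
        rw [mul_pow, ← neg_mul, Real.rpow_mul_natCast (abs_nonneg ξ)]
        ring
      _ ≤ B * (K * ‖x‖) * |ξ| ^ (-(α * n)) := by gcongr

theorem IsTestFunction.exists_norm_le_on_tsupport (hφ : IsTestFunction φ)
    (hS : IsStronglyContinuousSemigroup S) : ∃ K ≥ 0, ∀ t ∈ tsupport φ, ‖S t‖ ≤ K :=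
  exists_norm_le_of_continuousOn_apply hφ.hasCompactSupport fun x ↦
    (hS.continuousOn_apply x).mono (hφ.tsupport_subset.trans Ioi_subset_Ici_self)

theorem IsTestFunction.exists_norm_fourier_smul_le (hφ : IsTestFunction φ)
    (hS : IsStronglyContinuousSemigroup S) (hdecay : HasResolventDecay S M α) (hM : 0 ≤ M)
    (hα : 0 < α) (x : E) (m : ℕ) :
    ∃ D, ∀ ξ, ‖𝓕 (fun t ↦ φ t • S t x) ξ‖ ≤ D * ((1 + |ξ|) ^ m)⁻¹ := by
  obtain ⟨n, hn⟩ := exists_nat_ge (m / α)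
  obtain ⟨K, hK₀, hK⟩ := hφ.exists_norm_le_on_tsupport hS
  exact ⟨_, hφ.norm_fourier_smul_le_inv_one_add_pow hS hdecay hM hα.le hK hK₀
    ((div_le_iff₀' hα).1 hn) (le_max_left _ _) (le_max_right _ _) x⟩

theorem IsTestFunction.contDiff_smul (hφ : IsTestFunction φ)
    (hS : IsStronglyContinuousSemigroup S) (hdecay : HasResolventDecay S M α) (hM : 0 ≤ M)
    (hα : 0 < α) (x : E) : ContDiff ℝ ∞ fun t ↦ φ t • S t x :=
  contDiff_of_fourier_decay (hφ.continuous_smul hS x) (hφ.integrable_smul hS x)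
    (hφ.exists_norm_fourier_smul_le hS hdecay hM hα x)

theorem HasResolventDecay.contDiffOn (hdecay : HasResolventDecay S M α)
    (hS : IsStronglyContinuousSemigroup S) (hM : 0 ≤ M) (hα : 0 < α) :
    ContDiffOn ℝ ∞ S (Ioi 0) := by
  obtain ⟨_, -, hcutoff⟩ := exists_isTestFunction_eventuallyEq_one
  refine contDiffOn_of_contDiffOn_apply isOpen_Ioi fun x τ hτ ↦ ?_
  obtain ⟨φ, hφ, -, hone, -⟩ := hcutoff τ hτ
  exact ((hφ.contDiff_smul hS hdecay hM hα x).contDiffAt.congr_of_eventuallyEq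
    (eventuallyEq_smul hone _).symm).contDiffWithinAt

-- Cutting off at scale `τ` costs `τ⁻¹` for each of the `n` integrations by parts; the two powers of
-- `|ξ|` gained beyond `k` make the inverse Fourier integral converge.
theorem HasResolventDecay.exists_norm_iteratedDeriv_le (hdecay : HasResolventDecay S M α)
    (hS : IsStronglyContinuousSemigroup S) (hM : 0 ≤ M) (hα : 0 < α) {k n : ℕ}
    (hkn : k + 2 ≤ α * n) : ∃ D, ∀ τ ∈ Ioc 0 1, ‖iteratedDeriv k S τ‖ ≤ D * τ⁻¹ ^ n := by
  obtain ⟨G, hG, hcutoff⟩ := exists_isTestFunction_eventuallyEq_one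
  obtain ⟨K, hK₀, hK⟩ := exists_norm_le_of_continuousOn_apply (isCompact_Icc (a := 0) (b := 2))
    fun x ↦ (hS.continuousOn_apply x).mono Icc_subset_Ici_self
  set B := max (G 0) (M ^ n * G n)
  set c := (2 * Real.pi) ^ k * ∫ ξ : ℝ, ((1 + |ξ|) ^ 2)⁻¹
  refine ⟨2 ^ (k + 2) * (B * K) * c, fun τ ⟨hτ₀, hτ₁⟩ ↦ ?_⟩
  have hB : 0 ≤ B := (hG 0).trans (le_max_left _ _)
  have : 0 ≤ c := by positivity
  obtain ⟨φ, hφ, hsupp, hone, hint⟩ := hcutoff τ hτ₀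
  have hB₀ : ∫ t, ‖φ t‖ ≤ τ⁻¹ ^ n * B := calc
    ∫ t, ‖φ t‖ = τ * G 0 := by simpa using hint 0
    _ ≤ 1 * B := by gcongr; exacts [hG 0, le_max_left _ _]
    _ ≤ τ⁻¹ ^ n * B := by gcongr; exact one_le_pow₀ ((one_le_inv₀ hτ₀).2 hτ₁)
  have hBn : M ^ n * ∫ t, ‖iteratedDeriv n φ t‖ ≤ τ⁻¹ ^ n * B := calc
    M ^ n * ∫ t, ‖iteratedDeriv n φ t‖ = τ * (τ⁻¹ ^ n * (M ^ n * G n)) := by rw [hint]; ring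
    _ ≤ 1 * (τ⁻¹ ^ n * B) := by
      have := hG n
      gcongr
      exact le_max_right _ _
    _ = τ⁻¹ ^ n * B := one_mul _
  refine ContinuousLinearMap.opNorm_le_bound _ (by positivity) fun x ↦ ?_
  have happly : iteratedDeriv k (fun t ↦ S t x) τ = iteratedDeriv k S τ x :=
    iteratedDeriv_clm_comp ((ContinuousLinearMap.apply ℂ E x).restrictScalars ℝ)
      (((hdecay.contDiffOn hS hM hα).contDiffAt (Ioi_mem_nhds hτ₀)).of_le (mod_cast le_top))
  calc ‖iteratedDeriv k S τ x‖ = ‖iteratedDeriv k (fun t ↦ φ t • S t x) τ‖ := by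
        rw [(eventuallyEq_smul hone _).iteratedDeriv_eq, happly]
    _ ≤ 2 ^ (k + 2) * (τ⁻¹ ^ n * B * (K * ‖x‖)) * c :=
      norm_iteratedDeriv_le_of_fourier_decay (hφ.continuous_smul hS x) (hφ.integrable_smul hS x)
        (hφ.exists_norm_fourier_smul_le hS hdecay hM hα x)
        (hφ.norm_fourier_smul_le_inv_one_add_pow hS hdecay hM hα.le
          (fun t ht ↦ hK t (Icc_subset_Icc (by positivity) (by linarith) (hsupp ht))) hK₀
          (mod_cast hkn) hB₀ hBn x) τ
    _ = 2 ^ (k + 2) * (B * K) * c * τ⁻¹ ^ n * ‖x‖ := by ring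

theorem HasResolventDecay.isGevreyClass (hdecay : HasResolventDecay S M α)
    (hS : IsStronglyContinuousSemigroup S) (hM : 0 ≤ M) (hα : 0 < α) {δ : ℝ} (hδ : 1 / α < δ) :
    IsGevreyClass S δ 0 := by
  have hsmooth := hdecay.contDiffOn hS hM hα
  refine ⟨hsmooth, fun K hK hKc θ hθ ↦ ?_⟩
  obtain ⟨k, n, hkn, hn⟩ := exists_nat_mul_lt_of_one_div_lt hα hδ 2
  obtain ⟨D, hD⟩ := hdecay.exists_norm_iteratedDeriv_le hS hM hα hkn
  obtain ⟨a, b, ha, ha₁, hKab⟩ := exists_subset_Icc_of_isCompact_of_pos hKc hK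
  obtain ⟨B, hB⟩ := exists_norm_iteratedDeriv_le_of_contDiffOn isOpen_Ioi hsmooth isCompact_Icc
    (fun s hs ↦ (half_pos ha).trans_le hs.1 : Icc (a / 2) b ⊆ Ioi 0) k
  obtain ⟨C, hC, hbound⟩ := exists_gevrey_bound_of_submultiplicative
    (L := fun j t ↦ ‖iteratedDeriv j S t‖) (fun j t ↦ norm_nonneg _)
    (hS.norm_iteratedDeriv_add_le hsmooth) hn hD ha ha₁ hB hθ
  refine ⟨C, hC, fun t ht N ↦ ?_⟩
  rw [iteratedDerivWithin_of_isOpen isOpen_Ioi (hK ht)]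
  exact hbound N t (hKab ht)

end Semigroup

section ResolventEstimate

theorem le_rpow_mul_of_mul_le_sqrt_add {b q C X Z : ℝ} (hb : 1 ≤ b) (hq : 1 / 2 ≤ q)
    (hX : 0 ≤ X) (hZ : 0 ≤ Z) (h : b * X ≤ 2 * C * b ^ q * √(Z * X) + Z) :
    X ≤ (2 + 4 * C ^ 2) * b ^ (-(2 * (1 - q))) * Z := by
  have hb₀ : 0 < b := one_pos.trans_le hb
  set p := b ^ (q - 1) with hp
  have hbq : b ^ q = b * p := by rw [hp, Real.rpow_sub_one hb₀.ne', mul_div_cancel₀ _ hb₀.ne']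
  have hp2 : b ^ (-(2 * (1 - q))) = p ^ 2 := by
    rw [hp, ← Real.rpow_mul_natCast hb₀.le]; congr 1; push_cast; ring
  have hinv : b⁻¹ ≤ p ^ 2 := by
    rw [← hp2, ← Real.rpow_neg_one]
    exact Real.rpow_le_rpow_of_exponent_le hb (by linarith)
  have hdiv : X ≤ 2 * (C * p * √Z) * √X + b⁻¹ * Z := by
    refine le_of_mul_le_mul_left (h.trans_eq ?_) hb₀
    rw [hbq, Real.sqrt_mul hZ, mul_add, mul_inv_cancel_left₀ hb₀.ne']
    ring
  have amgm : 2 * (2 * (C * p * √Z)) * √X ≤ (2 * (C * p * √Z)) ^ 2 + √X ^ 2 :=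
    two_mul_le_add_sq _ _
  have hinvZ : b⁻¹ * Z ≤ p ^ 2 * Z := by gcongr
  rw [Real.sq_sqrt hX, mul_pow, mul_pow, Real.sq_sqrt hZ] at amgm
  rw [hp2]
  linarith

variable {H : Type*} [NormedAddCommGroup H] [InnerProductSpace ℂ H]

theorem inner_I_mul_smul_sub (β : ℝ) (x z : H) :
    inner ℂ ((Complex.I * β) • x - z) x = -(Complex.I * β) * (‖x‖ : ℂ) ^ 2 - inner ℂ z x := by
  rw [inner_sub_left, inner_smul_left, inner_self_eq_norm_sq_to_K]
  simp

theorem abs_re_inner_I_mul_smul_sub_le (β : ℝ) (x z : H) :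
    |(inner ℂ ((Complex.I * β) • x - z) x).re| ≤ ‖z‖ * ‖x‖ := by
  have hre : (inner ℂ ((Complex.I * β) • x - z) x).re = -(inner ℂ z x).re := by
    rw [inner_I_mul_smul_sub]; simp [← Complex.ofReal_pow]
  rw [hre, abs_neg]
  exact (Complex.abs_re_le_norm _).trans (norm_inner_le_norm z x)

theorem abs_mul_sq_norm_le_abs_im_inner_add (β : ℝ) (x z : H) :
    |β| * ‖x‖ ^ 2 ≤ |(inner ℂ ((Complex.I * β) • x - z) x).im| + ‖z‖ * ‖x‖ := by
  have him : β * ‖x‖ ^ 2 = -(inner ℂ ((Complex.I * β) • x - z) x).im - (inner ℂ z x).im := by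
    rw [inner_I_mul_smul_sub]; simp [← Complex.ofReal_pow]
  calc |β| * ‖x‖ ^ 2 = |β * ‖x‖ ^ 2| := by rw [abs_mul, abs_of_nonneg (sq_nonneg ‖x‖)]
    _ ≤ |(inner ℂ ((Complex.I * β) • x - z) x).im| + |(inner ℂ z x).im| := by
      rw [him]; exact (abs_sub _ _).trans_eq (by rw [abs_neg])
    _ ≤ |(inner ℂ ((Complex.I * β) • x - z) x).im| + ‖z‖ * ‖x‖ := by
      gcongr
      exact (Complex.abs_im_le_norm _).trans (norm_inner_le_norm z x)

theorem abs_mul_norm_le_of_abs_im_inner_le {q C β : ℝ} (hq₀ : 0 ≤ q) (hq₁ : q ≤ 1) (hC : 0 ≤ C)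
    {x y z : H} (hz : z = (Complex.I * β) • x - y)
    (h : |(inner ℂ y x).im| ≤ C * ‖y‖ ^ q * ‖x‖ ^ (1 - q) * √|(inner ℂ y x).re|) :
    |β| * ‖x‖ ≤ 2 * C * |β| ^ q * √(‖z‖ * ‖x‖) + ‖z‖ := by
  obtain hle | hlt := le_or_gt (|β| * ‖x‖) ‖z‖
  · exact hle.trans (le_add_of_nonneg_left (by positivity))
  have hx : 0 < ‖x‖ := pos_of_mul_pos_right ((norm_nonneg z).trans_lt hlt) (abs_nonneg β)
  obtain rfl : y = (Complex.I * β) • x - z := by rw [hz, sub_sub_cancel]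
  set y := (Complex.I * β) • x - z
  have hy : ‖y‖ ≤ 2 * (|β| * ‖x‖) := calc
    ‖y‖ ≤ |β| * ‖x‖ + ‖z‖ := (norm_sub_le _ _).trans_eq (by simp [norm_smul])
    _ ≤ 2 * (|β| * ‖x‖) := by linarith
  have hpow : ‖y‖ ^ q * ‖x‖ ^ (1 - q) ≤ 2 * |β| ^ q * ‖x‖ := calc
    ‖y‖ ^ q * ‖x‖ ^ (1 - q) ≤ (2 * (|β| * ‖x‖)) ^ q * ‖x‖ ^ (1 - q) := by gcongr
    _ = 2 ^ q * |β| ^ q * (‖x‖ ^ q * ‖x‖ ^ (1 - q)) := by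
      rw [Real.mul_rpow zero_le_two (by positivity), Real.mul_rpow (abs_nonneg β) hx.le]; ring
    _ = 2 ^ q * |β| ^ q * ‖x‖ := by rw [← Real.rpow_add hx, add_sub_cancel, Real.rpow_one]
    _ ≤ 2 * |β| ^ q * ‖x‖ := by
      gcongr
      exact Real.rpow_le_self_of_one_le one_le_two hq₁
  refine le_of_mul_le_mul_right ?_ hx
  calc |β| * ‖x‖ * ‖x‖ = |β| * ‖x‖ ^ 2 := by ring
    _ ≤ |(inner ℂ y x).im| + ‖z‖ * ‖x‖ := abs_mul_sq_norm_le_abs_im_inner_add β x z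
    _ ≤ C * (‖y‖ ^ q * ‖x‖ ^ (1 - q)) * √|(inner ℂ y x).re| + ‖z‖ * ‖x‖ := by
      rw [← mul_assoc C]; gcongr
    _ ≤ C * (2 * |β| ^ q * ‖x‖) * √(‖z‖ * ‖x‖) + ‖z‖ * ‖x‖ := by
      gcongr
      exact abs_re_inner_I_mul_smul_sub_le β x z
    _ = (2 * C * |β| ^ q * √(‖z‖ * ‖x‖) + ‖z‖) * ‖x‖ := by ring

theorem hasResolventDecay_of_abs_im_inner_le {S : ℝ → H →L[ℂ] H} {q C : ℝ}
    (hq : q ∈ Icc (1 / 2) 1) (hC : 0 ≤ C)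
    (h : ∀ x y, InGeneratorGraph S x y →
      |(inner ℂ y x).im| ≤ C * ‖y‖ ^ q * ‖x‖ ^ (1 - q) * √|(inner ℂ y x).re|) :
    HasResolventDecay S (2 + 4 * C ^ 2) (2 * (1 - q)) := fun x y hxy _ hβ ↦
  le_rpow_mul_of_mul_le_sqrt_add hβ hq.1 (norm_nonneg x) (norm_nonneg _)
    (abs_mul_norm_le_of_abs_im_inner_le (by linarith [hq.1]) hq.2 hC rfl (h x y hxy))

end ResolventEstimate

theorem inGeneratorGraph_iff_tendsto {E : Type*} [NormedAddCommGroup E] [NormedSpace ℂ E]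
    {S : ℝ → E →L[ℂ] E} (hS₀ : S 0 = ContinuousLinearMap.id ℂ E) {x y : E} :
    InGeneratorGraph S x y ↔ Tendsto (fun h : ℝ ↦ h⁻¹ • (S h x - x)) (𝓝[>] 0) (𝓝 y) := by
  rw [InGeneratorGraph, hasDerivWithinAt_iff_tendsto_slope, Ici_sdiff_left]
  simp [slope_fun_def, hS₀]

theorem fsi_semigroup_gevrey_class_general {H : Type*} [NormedAddCommGroup H]
    [InnerProductSpace ℂ H] [CompleteSpace H] {S : ℝ → H →L[ℂ] H}
    (hS : IsStronglyContinuousSemigroup S) {q C : ℝ} (hq : q ∈ Ico (1 / 2) 1) (hC : 0 ≤ C)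
    (hcoupling : ∀ x y, InGeneratorGraph S x y →
      |(inner ℂ y x).im| ≤ C * ‖y‖ ^ q * ‖x‖ ^ (1 - q) * √|(inner ℂ y x).re|)
    {δ : ℝ} (hδ : 1 / (2 * (1 - q)) < δ) : IsGevreyClass S δ 0 :=
  (hasResolventDecay_of_abs_im_inner_le (Ico_subset_Icc_self hq) hC hcoupling).isGevreyClass hS
    (by positivity) (by linarith [hq.2]) hδ

/-- Abstract form of the paper's main theorem. If the generator `A` of a
contraction semigroup `S` on a complex Hilbert space is dissipative, satisfies the
interpolation-type estimate on `Im ⟪A x, x⟫`, and `iβ` lies in the resolvent set of `A`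
for `|β| ≥ β₀`, then `S` is of Gevrey class `δ` for `t > 0`, for every
`δ > 2/(1 - 8ε)`. -/
theorem fsi_semigroup_gevrey_class
    {H : Type*} [NormedAddCommGroup H] [InnerProductSpace ℂ H] [CompleteSpace H]
    (S : ℝ → H →L[ℂ] H)
    (hS0 : S 0 = ContinuousLinearMap.id ℂ H)
    (hSadd : ∀ t s : ℝ, 0 ≤ t → 0 ≤ s → S (t + s) = (S t).comp (S s))
    (hScont : ∀ x : H, ContinuousOn (fun t => S t x) (Set.Ici (0 : ℝ)))
    (hcontraction : ∀ t : ℝ, 0 ≤ t → ‖S t‖ ≤ 1)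
    (domA : Set H)
    (hdom : domA = {x : H | ∃ y : H,
      Filter.Tendsto (fun h : ℝ => h⁻¹ • (S h x - x))
        (nhdsWithin 0 (Set.Ioi 0)) (nhds y)})
    (A : H → H)
    (hA : ∀ x ∈ domA,
      Filter.Tendsto (fun h : ℝ => h⁻¹ • (S h x - x))
        (nhdsWithin 0 (Set.Ioi 0)) (nhds (A x)))
    (ε : ℝ) (hε : ε ∈ Set.Ioo (0 : ℝ) (1 / 8))
    (C₀ : ℝ) (hC₀ : 0 < C₀)
    (β₀ : ℝ) (hβ₀ : 1 ≤ β₀)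
    (hdiss : ∀ x ∈ domA, (inner (𝕜 := ℂ) (A x) x).re ≤ 0)
    (hcoupling : ∀ x ∈ domA,
      |(inner (𝕜 := ℂ) (A x) x).im| ≤
        C₀ * ‖A x‖ ^ ((3 : ℝ) / 4 + 2 * ε) * ‖x‖ ^ ((1 : ℝ) / 4 - 2 * ε) *
          (-(inner (𝕜 := ℂ) (A x) x).re) ^ ((1 : ℝ) / 2))
    (hres : ∀ β : ℝ, β₀ ≤ |β| → ∃ R : H →L[ℂ] H,
      (∀ x ∈ domA, R ((Complex.I * (β : ℂ)) • x - A x) = x) ∧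
      (∀ y : H, R y ∈ domA ∧ (Complex.I * (β : ℂ)) • (R y) - A (R y) = y)) :
    ∀ δ : ℝ, 2 / (1 - 8 * ε) < δ → IsGevreyClass S δ 0 := by
  intro δ hδ
  obtain ⟨hε₀, hε₁⟩ := hε
  refine fsi_semigroup_gevrey_class_general (q := 3 / 4 + 2 * ε) ⟨hS0, hSadd, hScont⟩
    ⟨by linarith, by linarith⟩ hC₀.le (fun x y hxy ↦ ?_) (hδ.trans_eq' (by field_simp; ring))
  rw [inGeneratorGraph_iff_tendsto hS0] at hxy
  have hx : x ∈ domA := hdom ▸ ⟨y, hxy⟩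
  obtain rfl : A x = y := tendsto_nhds_unique (hA x hx) hxy
  rw [abs_of_nonpos (hdiss x hx), Real.sqrt_eq_rpow]
  convert hcoupling x hx using 4
  ring
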